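/- Let α ∈ ℂ and let φ, ψ : ℂ → ℂ be entire functions satisfying ψ''(x) = (2x − 2ψ(x)φ(x))·ψ(x), φ''(x) = (2x − 2ψ(x)φ(x))·φ(x), and φ'(x)ψ(x) − φ(x)ψ'(x) = 2α for all x ∈ ℂ. Define a_n, b_n by a_0 = φ, a_n = a_{n-1}' + ψ·(∑_{i+j=n-2, i,j≥0} a_i a_j), b_0 = ψ, b_n = b_{n-1}' + φ·(∑_{i+j=n-2, i,j≥0} b_i b_j), and for N ∈ ℤ let τ_N = det(a_{i+j})_{0≤i,j≤N-1} for N > 0, τ_0 = 1, τ_N = det(b_{i+j})_{0≤i,j≤|N|-1} for N < 0. Fix N ∈ ℤ and assume τ_N(x) ≠ 0 and τ_{N+1}(x) ≠ 0 for all x ∈ ℂ. Then u_N := τ_{N+1}'/τ_{N+1} − τ_N'/τ_N satisfies the Painlevé II equation with parameter α + N: u_N''(x) = 2u_N(x)³ − 4x·u_N(x) + 4(α + N + 1/2) for all x ∈ ℂ. -/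

import Mathlib

/-!
With `τ_{-1} = ψ`, the Desnanot–Jacobi identity gives the Toda equation
`τ_n'' τ_n - τ_n' ^ 2 + φ ψ τ_n ^ 2 = τ_{n+1} τ_{n-1}`. Induction along the Toda chain then yields
the bilinear relations
`τ_{n+1}'' τ_n - 2 τ_{n+1}' τ_n' + τ_{n+1} τ_n'' = (2 x - 2 φ ψ) τ_{n+1} τ_n` and
`τ_{n+1}' τ_{n-1} - τ_{n+1} τ_{n-1}' = 2 (α + n) τ_n ^ 2`.
The inductive step divides by tau functions, which may vanish identically; it is therefore carried
out in the universal differential ring generated by `x, φ, φ', ψ, ψ'`, which is an integral domain.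
For `u = (log (τ_{n+1} / τ_n))'` and `v = τ_{n+1} τ_{n-1} / τ_n ^ 2` the relations become the
Hamiltonian system `u' = 2 x - u ^ 2 - 2 v`, `v' = 2 u v - 2 (α + n)`, and eliminating `v` gives
Painlevé II. Negative indices follow by interchanging `φ` and `ψ`, which negates `α` and `u`.
-/

namespace PainleveII

open Matrix
open scoped Topology

section Determinants

variable {R ι : Type*} [CommRing R] [DecidableEq ι]

lemma derivation_prod {B : Type*} [CommSemiring B] [Algebra B R] (D : Derivation B R R)
    (s : Finset ι) (f : ι → R) :
    D (∏ i ∈ s, f i) = ∑ i ∈ s, (∏ j ∈ s.erase i, f j) * D (f i) := by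
  induction s using Finset.induction_on with
  | empty => simp
  | insert i s hi ih =>
    rw [Finset.prod_insert hi, D.leibniz, ih, Finset.sum_insert hi, Finset.erase_insert hi,
      add_comm, smul_eq_mul, smul_eq_mul, Finset.mul_sum]
    refine congrArg₂ _ rfl (Finset.sum_congr rfl fun j hj => ?_)
    have hij : i ≠ j := fun h => hi (h ▸ hj)
    rw [Finset.erase_insert_of_ne hij, Finset.prod_insert (by simp [hi]), mul_assoc]

variable [Fintype ι]

lemma trace_adjugate_mul (A B : Matrix ι ι R) :
    (A.adjugate * B).trace = ∑ j, (A.updateCol j (B.col j)).det := by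
  simp only [← cramer_apply, cramer_eq_adjugate_mulVec]
  rfl

lemma trace_adjugate_transpose_mul (A B : Matrix ι ι R) :
    (Aᵀ.adjugate * Bᵀ).trace = (A.adjugate * B).trace := by
  rw [← adjugate_transpose, ← transpose_mul, trace_transpose, trace_mul_comm]

lemma derivation_det {B : Type*} [CommSemiring B] [Algebra B R] (D : Derivation B R R)
    (A : Matrix ι ι R) :
    D A.det = (A.adjugate * A.map D).trace := by
  simp only [trace_adjugate_mul, det_apply, map_sum]
  rw [Finset.sum_comm]
  refine Finset.sum_congr rfl fun σ _ => ?_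
  have hsmul (u : ℤˣ) (r : R) : D (u • r) = u • D r := map_zsmul D (u : ℤ) r
  rw [hsmul, derivation_prod, ← Finset.smul_sum]
  refine congrArg _ (Finset.sum_congr rfl fun j _ => ?_)
  rw [← Finset.prod_erase_mul _ _ (Finset.mem_univ j), updateCol_self]
  refine congrArg₂ _ (Finset.prod_congr rfl fun i hi => ?_) rfl
  rw [updateCol_ne (Finset.ne_of_mem_erase hi)]

lemma trace_adjugate_mul_mul_self (A L : Matrix ι ι R) (hL : ∀ i, L i i = 0) :
    (A.adjugate * (L * A)).trace = 0 := by
  rw [trace_mul_comm, Matrix.mul_assoc, mul_adjugate]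
  simp [Matrix.trace, hL]

lemma trace_adjugate_mul_updateRow_zero (A : Matrix ι ι R) (i : ι) (v : ι → R) :
    (A.adjugate * (0 : Matrix ι ι R).updateRow i v).trace = (A.updateRow i v).det := by
  rw [← cramer_transpose_apply, cramer_eq_adjugate_mulVec, ← adjugate_transpose]
  simp only [trace, diag_apply, mul_apply, mulVec, dotProduct, transpose_apply]
  refine Finset.sum_congr rfl fun j _ => ?_
  rw [Finset.sum_eq_single i (fun m _ hm => by simp [updateRow_ne hm]) (by simp), updateRow_self]

/-- The minor of a block matrix obtained by bordering its upper left block with row `p` and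
column `q`. -/
def borderedMinor {κ : Type*} (M : Matrix (ι ⊕ κ) (ι ⊕ κ) R) (p q : κ) : R :=
  (M.submatrix (Sum.map id fun _ : Fin 1 => p) (Sum.map id fun _ : Fin 1 => q)).det

lemma map_borderedMinor {S κ : Type*} [CommRing S] (f : R →+* S)
    (M : Matrix (ι ⊕ κ) (ι ⊕ κ) R) (p q : κ) :
    f (borderedMinor M p q) = borderedMinor (M.map f) p q :=
  f.map_det _

lemma borderedMinor_eq_det_mul_schur {κ : Type*} (M : Matrix (ι ⊕ κ) (ι ⊕ κ) R)
    [Invertible M.toBlocks₁₁] (p q : κ) :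
    borderedMinor M p q = M.toBlocks₁₁.det *
      (M.toBlocks₂₂ - M.toBlocks₂₁ * ⅟M.toBlocks₁₁ * M.toBlocks₁₂) p q := by
  have hblocks : M.submatrix (Sum.map id fun _ : Fin 1 => p) (Sum.map id fun _ : Fin 1 => q) =
      fromBlocks M.toBlocks₁₁ (M.toBlocks₁₂.submatrix id fun _ => q)
        (M.toBlocks₂₁.submatrix (fun _ => p) id) (of fun _ _ => M.toBlocks₂₂ p q) := by
    ext (i | i) (j | j) <;> rfl
  rw [borderedMinor, hblocks, det_fromBlocks₁₁, det_fin_one]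
  rfl

/-- The difference of the two sides of the Desnanot–Jacobi identity. Being polynomial in the entries
of the matrix, it vanishes identically as soon as it vanishes for the generic matrix. -/
def desnanotJacobiDefect (M : Matrix (ι ⊕ Fin 2) (ι ⊕ Fin 2) R) : R :=
  M.det * M.toBlocks₁₁.det -
    (borderedMinor M 0 0 * borderedMinor M 1 1 - borderedMinor M 0 1 * borderedMinor M 1 0)

lemma map_desnanotJacobiDefect {S : Type*} [CommRing S] (f : R →+* S)
    (M : Matrix (ι ⊕ Fin 2) (ι ⊕ Fin 2) R) :
    f (desnanotJacobiDefect M) = desnanotJacobiDefect (M.map f) := by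
  simp only [desnanotJacobiDefect, map_sub, map_mul, map_borderedMinor, f.map_det]
  rfl

lemma desnanotJacobiDefect_eq_zero_of_isUnit (M : Matrix (ι ⊕ Fin 2) (ι ⊕ Fin 2) R)
    (hM : IsUnit M.toBlocks₁₁.det) : desnanotJacobiDefect M = 0 := by
  let := invertibleOfIsUnitDet _ hM
  have hdet : M.det = M.toBlocks₁₁.det *
      (M.toBlocks₂₂ - M.toBlocks₂₁ * ⅟M.toBlocks₁₁ * M.toBlocks₁₂).det := by
    rw [← det_fromBlocks₁₁, fromBlocks_toBlocks]
  simp only [desnanotJacobiDefect, hdet, borderedMinor_eq_det_mul_schur, det_fin_two]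
  ring

lemma det_toBlocks₁₁_mvPolynomialX_ne_zero (ι κ : Type*) [Fintype ι] [DecidableEq ι] :
    (mvPolynomialX (ι ⊕ κ) (ι ⊕ κ) ℤ).toBlocks₁₁.det ≠ 0 := by
  classical
  intro hdet
  have heval := congrArg (MvPolynomial.eval fun p => (1 : Matrix (ι ⊕ κ) (ι ⊕ κ) ℤ) p.1 p.2) hdet
  have hone : (mvPolynomialX (ι ⊕ κ) (ι ⊕ κ) ℤ).toBlocks₁₁.map
      (MvPolynomial.eval fun p => (1 : Matrix (ι ⊕ κ) (ι ⊕ κ) ℤ) p.1 p.2) = 1 := by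
    ext i j
    simp [toBlocks₁₁, one_apply]
  rw [RingHom.map_det, RingHom.mapMatrix_apply, hone, det_one, map_zero] at heval
  exact one_ne_zero heval

lemma desnanotJacobiDefect_mvPolynomialX (ι : Type*) [Fintype ι] [DecidableEq ι] :
    desnanotJacobiDefect (mvPolynomialX (ι ⊕ Fin 2) (ι ⊕ Fin 2) ℤ) = 0 := by
  set P := MvPolynomial ((ι ⊕ Fin 2) × (ι ⊕ Fin 2)) ℤ
  have hinj := IsFractionRing.injective P (FractionRing P)
  apply hinj
  rw [map_desnanotJacobiDefect, map_zero]
  apply desnanotJacobiDefect_eq_zero_of_isUnit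
  have hmap := (algebraMap P (FractionRing P)).map_det (mvPolynomialX (ι ⊕ Fin 2) _ ℤ).toBlocks₁₁
  refine isUnit_iff_ne_zero.2 fun h => det_toBlocks₁₁_mvPolynomialX_ne_zero ι (Fin 2) (hinj ?_)
  rw [hmap, map_zero]
  exact h

theorem desnanot_jacobi (M : Matrix (ι ⊕ Fin 2) (ι ⊕ Fin 2) R) :
    M.det * M.toBlocks₁₁.det =
      borderedMinor M 0 0 * borderedMinor M 1 1 - borderedMinor M 0 1 * borderedMinor M 1 0 := by
  have hM := congrArg (MvPolynomial.aeval fun p => M p.1 p.2 : _ →ₐ[ℤ] R).toRingHom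
    (desnanotJacobiDefect_mvPolynomialX ι)
  rw [map_desnanotJacobiDefect, map_zero] at hM
  have hspec : (mvPolynomialX (ι ⊕ Fin 2) (ι ⊕ Fin 2) ℤ).map
      (MvPolynomial.aeval fun p => M p.1 p.2 : _ →ₐ[ℤ] R).toRingHom = M :=
    mvPolynomialX_mapMatrix_aeval ℤ M
  rw [hspec] at hM
  exact sub_eq_zero.1 hM

end Determinants

section Hankel

variable {R : Type*}

/-- The submatrix of the infinite Hankel matrix `(a (i + j))` with row indices `r` and column
indices `c`. -/
def hankelMatrix {ι κ : Type*} (a : ℕ → R) (r : ι → ℕ) (c : κ → ℕ) : Matrix ι κ R :=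
  of fun i j => a (r i + c j)

@[simp]
lemma hankelMatrix_apply {ι κ : Type*} (a : ℕ → R) (r : ι → ℕ) (c : κ → ℕ) (i : ι) (j : κ) :
    hankelMatrix a r c i j = a (r i + c j) :=
  rfl

lemma hankelMatrix_transpose {ι κ : Type*} (a : ℕ → R) (r : ι → ℕ) (c : κ → ℕ) :
    (hankelMatrix a r c)ᵀ = hankelMatrix a c r := by
  ext i j
  exact congrArg a (add_comm _ _)

variable [CommRing R]

/-- The minor of the infinite Hankel matrix `(a (i + j))` with row indices `r` and column
indices `c`. -/
def hankelMinor {ι : Type*} [Fintype ι] [DecidableEq ι] (a : ℕ → R) (r c : ι → ℕ) : R :=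
  (hankelMatrix a r c).det

/-- The Hankel determinant `det (a (i + j))` with `0 ≤ i, j < n`. -/
def hankelDet (a : ℕ → R) (n : ℕ) : R :=
  hankelMinor a (Fin.val : Fin n → ℕ) Fin.val

lemma hankelDet_zero (a : ℕ → R) : hankelDet a 0 = 1 := det_fin_zero

lemma hankelDet_one (a : ℕ → R) : hankelDet a 1 = a 0 := det_fin_one _

lemma map_hankelDet {S : Type*} [CommRing S] (f : R →+* S) (a : ℕ → R) (n : ℕ) :
    f (hankelDet a n) = hankelDet (fun i => f (a i)) n :=
  f.map_det _

lemma hankelMinor_comm {ι : Type*} [Fintype ι] [DecidableEq ι] (a : ℕ → R) (r c : ι → ℕ) :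
    hankelMinor a r c = hankelMinor a c r := by
  rw [hankelMinor, ← det_transpose, hankelMatrix_transpose, hankelMinor]

lemma hankelMinor_comp_equiv {ι κ : Type*} [Fintype ι] [DecidableEq ι] [Fintype κ] [DecidableEq κ]
    (a : ℕ → R) (e : κ ≃ ι) (r c : ι → ℕ) :
    hankelMinor a (r ∘ e) (c ∘ e) = hankelMinor a r c :=
  det_submatrix_equiv_self e (hankelMatrix a r c)

/-- The increasing enumeration of `{0, …, k - 1, k + 1}`. -/
def skipIndex (k : ℕ) : Fin (k + 1) → ℕ :=
  Fin.lastCases (k + 1) Fin.val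

@[simp]
lemma skipIndex_last (k : ℕ) : skipIndex k (Fin.last k) = k + 1 :=
  Fin.lastCases_last

@[simp]
lemma skipIndex_castSucc {k : ℕ} (i : Fin k) : skipIndex k i.castSucc = i :=
  Fin.lastCases_castSucc i

lemma hankelDet_mul_hankelDet (a : ℕ → R) (k : ℕ) :
    hankelDet a (k + 2) * hankelDet a k =
      hankelDet a (k + 1) * hankelMinor a (skipIndex k) (skipIndex k) -
        hankelMinor a Fin.val (skipIndex k) * hankelMinor a (skipIndex k) Fin.val := by
  let index : Fin k ⊕ Fin 2 → ℕ := fun i => (finSumFinEquiv i).val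
  have val_comp : Fin.val ∘ (finSumFinEquiv : Fin k ⊕ Fin 1 ≃ _) =
      index ∘ Sum.map id fun _ => 0 := by
    ext (i | i) <;> simp [index]
  have skip_comp : skipIndex k ∘ (finSumFinEquiv : Fin k ⊕ Fin 1 ≃ _) =
      index ∘ Sum.map id fun _ => 1 := by
    ext (i | i)
    · exact skipIndex_castSucc i
    · simp [index, Fin.fin_one_eq_zero i, show Fin.natAdd k (0 : Fin 1) = Fin.last k from rfl]
  have hJacobi := desnanot_jacobi (hankelMatrix a index index)
  have hfull : hankelMinor a index index = hankelDet a (k + 2) :=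
    hankelMinor_comp_equiv a finSumFinEquiv _ _
  simp only [hankelDet, ← hankelMinor_comp_equiv (ι := Fin (k + 1)) a finSumFinEquiv, val_comp,
    skip_comp]
  rw [← hankelDet, ← hfull]
  exact hJacobi

end Hankel

section Toda

variable {B R : Type*} [CommSemiring B] [CommRing R] [Algebra B R]

/-- The part of the convolution `∑ a_k a_{p+q-1-k}` with `k < p`, as it appears in row `p` and
column `q` of the derivative of a Hankel matrix; the index `p - 1 - m` is never truncated. -/
def partialConv (a : ℕ → R) (p q : ℕ) : R :=
  ∑ m ∈ Finset.range p, a (p - 1 - m) * a (m + q)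

lemma sum_range_add_mul_reflect (a : ℕ → R) (p q : ℕ) :
    ∑ m ∈ Finset.range (p + q), a m * a (p + q - 1 - m) =
      partialConv a p q + partialConv a q p := by
  rw [Finset.sum_range_add, ← Finset.sum_range_reflect, partialConv, partialConv]
  congr 1 <;> refine Finset.sum_congr rfl fun m hm => ?_ <;> have := Finset.mem_range.1 hm
  · congr 2
    lia
  · rw [mul_comm]
    congr 2 <;> lia

lemma partialConv_eq_sum_fin (a : ℕ → R) {n p : ℕ} (hp : p ≤ n) (q : ℕ) :
    partialConv a p q = ∑ m : Fin n, (if m.val < p then a (p - 1 - m) else 0) * a (m + q) := by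
  simp only [ite_mul, zero_mul]
  rw [Fin.sum_univ_eq_sum_range fun m => if m < p then a (p - 1 - m) * a (m + q) else 0,
    ← Finset.sum_filter, partialConv]
  refine Finset.sum_congr (Finset.ext fun m => ?_) fun _ _ => rfl
  rw [Finset.mem_range, Finset.mem_filter, Finset.mem_range]
  lia

lemma partialConv_succ (a : ℕ → R) (k q : ℕ) :
    partialConv a (k + 1) q = ∑ m : Fin k, a (k - m) * a (m + q) + a 0 * a (k + q) := by
  simp [partialConv, Finset.sum_range_succ, Finset.sum_range]

/-- The correction by which differentiating the entries of a Hankel matrix differs from shifting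
its columns, up to transposition and the factor `ψ` of the recursion. -/
def convMatrix {ι κ : Type*} (a : ℕ → R) (r : ι → ℕ) (c : κ → ℕ) : Matrix ι κ R :=
  of fun i j => partialConv a (r i) (c j)

lemma trace_adjugate_mul_convMatrix_val (a : ℕ → R) {n : ℕ} (c : Fin n → ℕ) :
    ((hankelMatrix a Fin.val c).adjugate * convMatrix a Fin.val c).trace = 0 := by
  let L : Matrix (Fin n) (Fin n) R := of fun i m => if m < i then a (i - 1 - m) else 0
  have hconv : convMatrix a Fin.val c = L * hankelMatrix a Fin.val c := by
    ext i j
    exact partialConv_eq_sum_fin a i.isLt.le (c j)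
  rw [hconv]
  exact trace_adjugate_mul_mul_self _ L fun i => if_neg (lt_irrefl i)

lemma trace_adjugate_mul_convMatrix_skipIndex (a : ℕ → R) {k : ℕ} (c : Fin (k + 1) → ℕ) :
    ((hankelMatrix a (skipIndex k) c).adjugate * convMatrix a (skipIndex k) c).trace =
      a 0 * hankelMinor a Fin.val c := by
  let L : Matrix (Fin (k + 1)) (Fin (k + 1)) R :=
    of fun i m => if m < i then a (skipIndex k i - 1 - m) else 0
  have hconv : convMatrix a (skipIndex k) c = L * hankelMatrix a (skipIndex k) c +
      a 0 • (0 : Matrix _ _ R).updateRow (Fin.last k) fun j => a (k + c j) := by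
    ext i j
    induction i using Fin.lastCases with
    | last => simp [L, convMatrix, mul_apply, Fin.sum_univ_castSucc, partialConv_succ]
    | cast i =>
      simp [L, convMatrix, mul_apply, Fin.sum_univ_castSucc,
        partialConv_eq_sum_fin a i.isLt.le, (Fin.castSucc_lt_last i).not_gt]
  have hrow : (hankelMatrix a (skipIndex k) c).updateRow (Fin.last k) (fun j => a (k + c j)) =
      hankelMatrix a Fin.val c := by
    ext i j
    induction i using Fin.lastCases with
    | last => simp
    | cast i => simp [Fin.castSucc_ne_last]
  rw [hconv, Matrix.mul_add, trace_add,
    trace_adjugate_mul_mul_self _ L fun i => if_neg (lt_irrefl i), zero_add, Matrix.mul_smul,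
    trace_smul, trace_adjugate_mul_updateRow_zero, hrow, smul_eq_mul, hankelMinor]

lemma trace_adjugate_mul_hankelMatrix_val_add_one (a : ℕ → R) {k : ℕ} (r : Fin (k + 1) → ℕ) :
    ((hankelMatrix a r Fin.val).adjugate * hankelMatrix a r fun j => j.val + 1).trace =
      hankelMinor a r (skipIndex k) := by
  rw [trace_adjugate_mul, Fin.sum_univ_castSucc, Finset.sum_eq_zero, zero_add]
  · refine congrArg det (Matrix.ext fun i j => ?_)
    induction j using Fin.lastCases with
    | last => simp
    | cast j => simp [Fin.castSucc_ne_last]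
  · intro j _
    have hj : j.castSucc ≠ j.succ := Fin.castSucc_lt_succ.ne
    refine det_zero_of_column_eq hj fun i => ?_
    rw [updateCol_self, updateCol_ne hj.symm]
    simp

/-- The recursion for `a_n` over a differential ring; the index `n - 1 - k` is never truncated. -/
def IsConvolutionSeq (D : Derivation B R R) (ψ : R) (a : ℕ → R) : Prop :=
  ∀ n, a (n + 1) = D (a n) + ψ * ∑ k ∈ Finset.range n, a k * a (n - 1 - k)

/-- The solution of the recursion `IsConvolutionSeq` with initial value `φ`. -/
def convolutionSeq (D : Derivation B R R) (φ ψ : R) : ℕ → R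
  | 0 => φ
  | n + 1 => D (convolutionSeq D φ ψ n) +
      ψ * ∑ k : Fin n, convolutionSeq D φ ψ k * convolutionSeq D φ ψ (n - 1 - k)

lemma convolutionSeq_zero (D : Derivation B R R) (φ ψ : R) : convolutionSeq D φ ψ 0 = φ := by
  rw [convolutionSeq]

lemma isConvolutionSeq_convolutionSeq (D : Derivation B R R) (φ ψ : R) :
    IsConvolutionSeq D ψ (convolutionSeq D φ ψ) := by
  intro n
  rw [convolutionSeq, Finset.sum_range]

namespace IsConvolutionSeq

variable {D : Derivation B R R} {ψ : R} {a : ℕ → R}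

lemma derivation_apply_add (ha : IsConvolutionSeq D ψ a) (p q : ℕ) :
    D (a (p + q)) = a (p + q + 1) - ψ * (partialConv a p q + partialConv a q p) := by
  rw [ha, sum_range_add_mul_reflect, add_sub_cancel_right]

lemma derivation_hankelMinor (ha : IsConvolutionSeq D ψ a) {k : ℕ} (r : Fin (k + 1) → ℕ) :
    D (hankelMinor a r Fin.val) = hankelMinor a r (skipIndex k) -
      ψ * ((hankelMatrix a r Fin.val).adjugate * convMatrix a r Fin.val).trace := by
  have hD : (hankelMatrix a r Fin.val).map D = hankelMatrix a r (fun j : Fin (k + 1) => j + 1) -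
      ψ • (convMatrix a r Fin.val + (convMatrix a Fin.val r)ᵀ) := by
    ext i j
    exact ha.derivation_apply_add (r i) j
  have htranspose :
      ((hankelMatrix a r Fin.val).adjugate * (convMatrix a Fin.val r)ᵀ).trace = 0 := by
    rw [← hankelMatrix_transpose, trace_adjugate_transpose_mul]
    exact trace_adjugate_mul_convMatrix_val a r
  rw [hankelMinor, derivation_det, hD, Matrix.mul_sub, trace_sub,
    trace_adjugate_mul_hankelMatrix_val_add_one, Matrix.mul_smul, trace_smul, Matrix.mul_add,
    trace_add, htranspose, add_zero, smul_eq_mul]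

lemma derivation_hankelDet (ha : IsConvolutionSeq D ψ a) (k : ℕ) :
    D (hankelDet a (k + 1)) = hankelMinor a Fin.val (skipIndex k) := by
  rw [hankelDet, ha.derivation_hankelMinor, trace_adjugate_mul_convMatrix_val, mul_zero, sub_zero]

lemma derivation_derivation_hankelDet (ha : IsConvolutionSeq D ψ a) (k : ℕ) :
    D (D (hankelDet a (k + 1))) =
      hankelMinor a (skipIndex k) (skipIndex k) - a 0 * ψ * hankelDet a (k + 1) := by
  rw [ha.derivation_hankelDet, hankelMinor_comm, ha.derivation_hankelMinor,
    trace_adjugate_mul_convMatrix_skipIndex, hankelDet]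
  ring

theorem toda (ha : IsConvolutionSeq D ψ a) (k : ℕ) :
    D (D (hankelDet a (k + 1))) * hankelDet a (k + 1) - D (hankelDet a (k + 1)) ^ 2 +
      a 0 * ψ * hankelDet a (k + 1) ^ 2 = hankelDet a (k + 2) * hankelDet a k := by
  rw [hankelDet_mul_hankelDet, ha.derivation_derivation_hankelDet, ha.derivation_hankelDet,
    hankelMinor_comm a (skipIndex k) Fin.val]
  ring

end IsConvolutionSeq

end Toda

section Hirota

variable {B R : Type*} [CommSemiring B] [CommRing R] [Algebra B R]

/-- The first-order Hirota bilinear operator `D f · g`. -/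
def hirota₁ (D : Derivation B R R) (f g : R) : R :=
  D f * g - f * D g

/-- The second-order Hirota bilinear operator `D² f · g`. -/
def hirota₂ (D : Derivation B R R) (f g : R) : R :=
  D (D f) * g - 2 * D f * D g + f * D (D g)

variable [IsDomain R] {D : Derivation B R R}

lemma hirota₂_succ {p c f g h : R} (hf : f ≠ 0) (hc : D c = 0)
    (hgf : hirota₂ D g f = p * (g * f)) (hhf : hirota₁ D h f = c * g ^ 2) :
    hirota₂ D h g = p * (h * g) := by
  have hderiv := congrArg D hhf
  simp only [hirota₁, map_sub, Derivation.leibniz, Derivation.leibniz_pow, smul_eq_mul, hc,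
    nsmul_eq_mul] at hderiv
  rw [hirota₂] at hgf ⊢
  rw [hirota₁] at hhf
  apply mul_left_cancel₀ hf
  linear_combination g * hderiv + h * hgf - 2 * D g * hhf

/- With `u = (log (h / g))'`, `v₁ = h f / g ^ 2` and `v₂ = k g / h ^ 2`, the Toda equations turn
`hgh` into `v₂ + v₁ + u ^ 2 = 2 x`, and differentiating gives
`v₂ (log (k / g))' - v₁ (log (h / f))' = 2`. -/
lemma hirota₁_succ {x w c f g h k : R} (hg : g ≠ 0) (hx : D x = 1)
    (hTodag : D (D g) * g - D g ^ 2 + w * g ^ 2 = h * f)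
    (hTodah : D (D h) * h - D h ^ 2 + w * h ^ 2 = k * g)
    (hhg : hirota₂ D h g = (2 * x - 2 * w) * (h * g)) (hhf : hirota₁ D h f = c * g ^ 2) :
    hirota₁ D k g = (c + 2) * h ^ 2 := by
  have dTodag := congrArg D hTodag
  have dTodah := congrArg D hTodah
  have dhg := congrArg D hhg
  have h2 : D (2 : R) = 0 := D.map_natCast 2
  simp only [hirota₂, map_add, map_sub, Derivation.leibniz, Derivation.leibniz_pow, smul_eq_mul,
    nsmul_eq_mul, hx, h2] at dTodag dTodah dhg
  rw [hirota₂] at hhg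
  rw [hirota₁] at hhf ⊢
  apply mul_left_cancel₀ (pow_ne_zero 2 hg)
  linear_combination -g ^ 2 * dTodah + 2 * g * D g * hTodah + h * g * dhg - h ^ 2 * dTodag -
    (D h * g + h * D g) * hhg + 2 * h * D h * hTodag + h ^ 2 * hhf

theorem hirota_of_toda {x w c : R} {T : ℕ → R} (hx : D x = 1) (hc : D c = 0)
    (hcn : ∀ n : ℕ, c + 2 * n ≠ 0)
    (hToda : ∀ n, D (D (T (n + 1))) * T (n + 1) - D (T (n + 1)) ^ 2 + w * T (n + 1) ^ 2 =
      T (n + 2) * T n)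
    (hT₀ : T 0 ≠ 0) (hT₁ : T 1 ≠ 0)
    (hhirota₂ : hirota₂ D (T 2) (T 1) = (2 * x - 2 * w) * (T 2 * T 1))
    (hhirota₁ : hirota₁ D (T 2) (T 0) = c * T 1 ^ 2) (n : ℕ) :
    (T n ≠ 0 ∧ T (n + 1) ≠ 0) ∧
      hirota₂ D (T (n + 2)) (T (n + 1)) = (2 * x - 2 * w) * (T (n + 2) * T (n + 1)) ∧
      hirota₁ D (T (n + 2)) (T n) = (c + 2 * n) * T (n + 1) ^ 2 := by
  induction n with
  | zero => exact ⟨⟨hT₀, hT₁⟩, hhirota₂, by simpa using hhirota₁⟩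
  | succ n ih =>
    obtain ⟨⟨-, hT⟩, h₂, h₁⟩ := ih
    have hT' : T (n + 2) ≠ 0 := by
      intro hzero
      rw [hzero, hirota₁, map_zero, zero_mul, zero_mul, sub_zero] at h₁
      exact mul_ne_zero (hcn n) (pow_ne_zero 2 hT) h₁.symm
    have h₁' := hirota₁_succ hT hx (hToda n) (hToda (n + 1)) h₂ h₁
    have hconst : D (c + 2 * n + 2) = 0 := by
      rw [show c + 2 * n + 2 = c + ((2 * n + 2 : ℕ) : R) by push_cast; ring, map_add, hc,
        D.map_natCast, add_zero]
    refine ⟨⟨hT, hT'⟩, hirota₂_succ hT hconst h₂ h₁', ?_⟩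
    rw [h₁']
    push_cast
    ring

end Hirota

section TauSequence

variable {R : Type*} [CommRing R]

/-- The sequence `τ_{n-1}` of tau functions, starting from `τ_{-1} = ψ`. -/
def shiftedTau (ψ : R) (a : ℕ → R) : ℕ → R
  | 0 => ψ
  | n + 1 => hankelDet a n

lemma map_shiftedTau {S : Type*} [CommRing S] (f : R →+* S) (ψ : R) (a : ℕ → R) (n : ℕ) :
    f (shiftedTau ψ a n) = shiftedTau (f ψ) (fun i => f (a i)) n := by
  cases n with
  | zero => rfl
  | succ n => exact map_hankelDet f a n

variable {B : Type*} [CommSemiring B] [Algebra B R] {D : Derivation B R R} {ψ : R} {a : ℕ → R}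

namespace IsConvolutionSeq

lemma toda_shiftedTau (ha : IsConvolutionSeq D ψ a) (n : ℕ) :
    D (D (shiftedTau ψ a (n + 1))) * shiftedTau ψ a (n + 1) - D (shiftedTau ψ a (n + 1)) ^ 2 +
      a 0 * ψ * shiftedTau ψ a (n + 1) ^ 2 = shiftedTau ψ a (n + 2) * shiftedTau ψ a n := by
  cases n with
  | zero => simp [shiftedTau, hankelDet_zero, hankelDet_one]
  | succ n => exact ha.toda n

theorem hirota_shiftedTau [IsDomain R] (ha : IsConvolutionSeq D ψ a) {x : R} (hx : D x = 1)
    (hφ : D (D (a 0)) = (2 * x - 2 * (a 0 * ψ)) * a 0)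
    (hψ : D (D ψ) = (2 * x - 2 * (a 0 * ψ)) * ψ)
    (hne : ∀ n : ℕ, hirota₁ D (a 0) ψ + 2 * n ≠ 0) (n : ℕ) :
    hirota₂ D (shiftedTau ψ a (n + 2)) (shiftedTau ψ a (n + 1)) =
        (2 * x - 2 * (a 0 * ψ)) * (shiftedTau ψ a (n + 2) * shiftedTau ψ a (n + 1)) ∧
      hirota₁ D (shiftedTau ψ a (n + 2)) (shiftedTau ψ a n) =
        (hirota₁ D (a 0) ψ + 2 * n) * shiftedTau ψ a (n + 1) ^ 2 := by
  have hconst : D (hirota₁ D (a 0) ψ) = 0 := by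
    simp only [hirota₁, map_sub, Derivation.leibniz, smul_eq_mul, hφ, hψ]
    ring
  have hψ_ne : ψ ≠ 0 := by
    rintro rfl
    exact hne 0 (by simp [hirota₁])
  refine (hirota_of_toda hx hconst hne ha.toda_shiftedTau hψ_ne ?_ ?_ ?_ n).2
  · simp [shiftedTau, hankelDet_zero]
  · simp [shiftedTau, hankelDet_zero, hankelDet_one, hirota₂, hφ]
  · simp [shiftedTau, hankelDet_zero, hankelDet_one]

end IsConvolutionSeq

end TauSequence

section UniversalRing

open MvPolynomial

/-- The independent variable and the one-jets of `φ` and `ψ`, generating the universal differential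
ring; higher derivatives are eliminated by the second-order equations. -/
inductive Jet
  | x | phi | dphi | psi | dpsi

/-- The derivative of each generator of the universal differential ring. -/
noncomputable def jetDerivative : Jet → MvPolynomial Jet ℤ
  | .x => 1
  | .phi => X .dphi
  | .dphi => (2 * X .x - 2 * (X .phi * X .psi)) * X .phi
  | .psi => X .dpsi
  | .dpsi => (2 * X .x - 2 * (X .phi * X .psi)) * X .psi

/-- The derivation `d/dx` of the universal differential ring. -/
noncomputable def jetDerivation : Derivation ℤ (MvPolynomial Jet ℤ) (MvPolynomial Jet ℤ) :=
  mkDerivation ℤ jetDerivative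

lemma jetDerivation_X (j : Jet) : jetDerivation (X j) = jetDerivative j :=
  mkDerivation_X ℤ _ j

/-- The entries `a_n` in the universal differential ring. -/
noncomputable def jetSeq : ℕ → MvPolynomial Jet ℤ :=
  convolutionSeq jetDerivation (X .phi) (X .psi)

/-- The tau functions `τ_{n-1}` in the universal differential ring. -/
noncomputable def jetTau : ℕ → MvPolynomial Jet ℤ :=
  shiftedTau (X .psi) jetSeq

/-- The constant `φ' ψ - φ ψ'` of the universal differential ring. -/
noncomputable def jetWronskian : MvPolynomial Jet ℤ :=
  X .dphi * X .psi - X .phi * X .dpsi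

lemma jetWronskian_add_two_mul_ne_zero (n : ℕ) : jetWronskian + 2 * n ≠ 0 := by
  intro hzero
  have heval := congrArg (eval fun | .dphi | .psi => 1 | .x | .phi | .dpsi => (0 : ℤ)) hzero
  simp only [jetWronskian, map_add, map_sub, map_mul, eval_X, map_ofNat, map_natCast, map_zero]
    at heval
  lia

lemma jetTau_relations (n : ℕ) :
    (jetDerivation (jetDerivation (jetTau (n + 1))) * jetTau (n + 1) -
        jetDerivation (jetTau (n + 1)) ^ 2 + X .phi * X .psi * jetTau (n + 1) ^ 2 =
          jetTau (n + 2) * jetTau n) ∧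
      hirota₂ jetDerivation (jetTau (n + 2)) (jetTau (n + 1)) =
        (2 * X .x - 2 * (X .phi * X .psi)) * (jetTau (n + 2) * jetTau (n + 1)) ∧
      hirota₁ jetDerivation (jetTau (n + 2)) (jetTau n) =
        (jetWronskian + 2 * n) * jetTau (n + 1) ^ 2 := by
  have ha : IsConvolutionSeq jetDerivation (X .psi) jetSeq := isConvolutionSeq_convolutionSeq _ _ _
  have hzero : jetSeq 0 = X .phi := convolutionSeq_zero _ _ _
  have hW : hirota₁ jetDerivation (jetSeq 0) (X .psi) = jetWronskian := by
    simp [hzero, hirota₁, jetDerivation_X, jetDerivative, jetWronskian]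
  have hToda := ha.toda_shiftedTau n
  have hHirota := ha.hirota_shiftedTau (x := X .x) (jetDerivation_X _)
    (by simp [hzero, jetDerivation_X, jetDerivative])
    (by simp [hzero, jetDerivation_X, jetDerivative])
    (fun m => hW ▸ jetWronskian_add_two_mul_ne_zero m) n
  rw [hW, hzero] at hHirota
  rw [hzero] at hToda
  exact ⟨hToda, hHirota⟩

end UniversalRing

section PainleveTwo

variable {𝕜 : Type*} [NontriviallyNormedField 𝕜]

/-- The equation P_II[β] for `u` at the point `x`, with the constant `4 (β + 1 / 2)` expanded so
that it also makes sense in characteristic two. -/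
def SolvesPainleveIIAt (β : 𝕜) (u : 𝕜 → 𝕜) (x : 𝕜) : Prop :=
  deriv (deriv u) x = 2 * u x ^ 3 - 4 * x * u x + (4 * β + 2)

namespace SolvesPainleveIIAt

variable {β x : 𝕜} {u v : 𝕜 → 𝕜}

lemma congr (hu : SolvesPainleveIIAt β u x) (huv : u =ᶠ[𝓝 x] v) : SolvesPainleveIIAt β v x := by
  rw [SolvesPainleveIIAt, ← huv.deriv.deriv_eq, ← huv.eq_of_nhds]
  exact hu

lemma neg (hu : SolvesPainleveIIAt β u x) : SolvesPainleveIIAt (-β - 1) (-u) x := by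
  rw [SolvesPainleveIIAt] at hu ⊢
  rw [deriv.neg', deriv.fun_neg, hu, Pi.neg_apply]
  ring

lemma of_hamiltonian_system (hu : ∀ᶠ y in 𝓝 x, HasDerivAt u (2 * y - u y ^ 2 - 2 * v y) y)
    (hv : HasDerivAt v (2 * u x * v x - 2 * β) x) : SolvesPainleveIIAt β u x := by
  have hderiv : deriv u =ᶠ[𝓝 x] fun y => 2 * y - u y ^ 2 - 2 * v y :=
    hu.mono fun _ hy => hy.deriv
  have hderiv₂ := (((hasDerivAt_id' x).const_mul 2).fun_sub (hu.self_of_nhds.fun_pow 2)).fun_sub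
    (hv.const_mul 2)
  rw [SolvesPainleveIIAt, hderiv.deriv_eq, hderiv₂.deriv]
  push_cast
  ring

end SolvesPainleveIIAt

/-- The ring homomorphisms `ev y` interpret the elements of a differential ring as functions on `U`,
and the derivation as differentiation. -/
def RealizesOn {B R : Type*} [CommSemiring B] [CommRing R] [Algebra B R] (U : Set 𝕜)
    (D : Derivation B R R) (ev : 𝕜 → R →+* 𝕜) : Prop :=
  ∀ p, ∀ x ∈ U, HasDerivAt (fun y => ev y p) (ev x (D p)) x

namespace RealizesOn

variable {B R : Type*} [CommSemiring B] [CommRing R] [Algebra B R] {U : Set 𝕜}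
  {D : Derivation B R R} {ev : 𝕜 → R →+* 𝕜} {t w c f g h : R} {x : 𝕜}

lemma hasDerivAt_logDeriv_sub (hev : RealizesOn U D ev) (hx : x ∈ U)
    (hToda : D (D g) * g - D g ^ 2 + w * g ^ 2 = h * f)
    (hhirota₂ : hirota₂ D h g = (2 * t - 2 * w) * (h * g)) (hg : ev x g ≠ 0) (hh : ev x h ≠ 0) :
    HasDerivAt (fun y => ev y (D h) / ev y h - ev y (D g) / ev y g)
      (2 * ev x t - (ev x (D h) / ev x h - ev x (D g) / ev x g) ^ 2 -
        2 * (ev x h * ev x f / ev x g ^ 2)) x := by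
  have hToda' := congrArg (ev x) hToda
  have hhirota₂' := congrArg (ev x) hhirota₂
  simp only [hirota₂, map_add, map_sub, map_mul, map_pow, map_ofNat] at hToda' hhirota₂'
  refine (((hev (D h) x hx).fun_div (hev h x hx) hh).fun_sub
    ((hev (D g) x hx).fun_div (hev g x hx) hg)).congr_deriv ?_
  field_simp
  linear_combination ev x h * ev x g * hhirota₂' - 2 * ev x h ^ 2 * hToda'

lemma hasDerivAt_mul_div_sq (hev : RealizesOn U D ev) (hx : x ∈ U)
    (hhirota₁ : hirota₁ D h f = c * g ^ 2) (hg : ev x g ≠ 0) (hh : ev x h ≠ 0) :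
    HasDerivAt (fun y => ev y h * ev y f / ev y g ^ 2)
      (2 * (ev x (D h) / ev x h - ev x (D g) / ev x g) * (ev x h * ev x f / ev x g ^ 2) -
        ev x c) x := by
  have hhirota₁' := congrArg (ev x) hhirota₁
  simp only [hirota₁, map_sub, map_mul, map_pow] at hhirota₁'
  refine (((hev h x hx).fun_mul (hev f x hx)).fun_div ((hev g x hx).fun_pow 2)
    (pow_ne_zero 2 hg)).congr_deriv ?_
  field_simp
  push_cast
  linear_combination -ev x g ^ 2 * hhirota₁'

theorem solvesPainleveIIAt (hev : RealizesOn U D ev) (hU : IsOpen U) {β : 𝕜}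
    (ht : ∀ y ∈ U, ev y t = y) (hx : x ∈ U) (hc : ev x c = 2 * β)
    (hToda : D (D g) * g - D g ^ 2 + w * g ^ 2 = h * f)
    (hhirota₂ : hirota₂ D h g = (2 * t - 2 * w) * (h * g))
    (hhirota₁ : hirota₁ D h f = c * g ^ 2) (hg : ev x g ≠ 0) (hh : ev x h ≠ 0) :
    SolvesPainleveIIAt β (fun y => ev y (D h) / ev y h - ev y (D g) / ev y g) x := by
  refine .of_hamiltonian_system (v := fun y => ev y h * ev y f / ev y g ^ 2) ?_ ?_
  · filter_upwards [hU.mem_nhds hx, (hev g x hx).continuousAt.eventually_ne hg,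
      (hev h x hx).continuousAt.eventually_ne hh] with y hy hgy hhy
    have hu := hev.hasDerivAt_logDeriv_sub hy hToda hhirota₂ hgy hhy
    rwa [ht y hy] at hu
  · rw [← hc]
    exact hev.hasDerivAt_mul_div_sq hx hhirota₁ hg hh

end RealizesOn

end PainleveTwo

section TauFunctions

open MvPolynomial

variable {𝕜 : Type*} [NontriviallyNormedField 𝕜]

/-- The conditions `φ'' / φ = ψ'' / ψ = 2 x - 2 ψ φ` and `φ' ψ - φ ψ' = 2 α` on the set `U`, without
the divisions. -/
structure IsSeedOn (U : Set 𝕜) (φ ψ : 𝕜 → 𝕜) (α : 𝕜) : Prop where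
  differentiableAt_left : ∀ x ∈ U, DifferentiableAt 𝕜 φ x
  differentiableAt_right : ∀ x ∈ U, DifferentiableAt 𝕜 ψ x
  differentiableAt_deriv_left : ∀ x ∈ U, DifferentiableAt 𝕜 (deriv φ) x
  differentiableAt_deriv_right : ∀ x ∈ U, DifferentiableAt 𝕜 (deriv ψ) x
  deriv_deriv_left : ∀ x ∈ U, deriv (deriv φ) x = (2 * x - 2 * ψ x * φ x) * φ x
  deriv_deriv_right : ∀ x ∈ U, deriv (deriv ψ) x = (2 * x - 2 * ψ x * φ x) * ψ x
  wronskian : ∀ x ∈ U, deriv φ x * ψ x - φ x * deriv ψ x = 2 * α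

/-- The sequence `a_n` of functions on `U` built from `φ` and `ψ`; interchanging `φ` and `ψ` gives
the sequence `b_n`. The index `n - 1 - k` is never truncated. -/
structure IsEntrySeqOn (U : Set 𝕜) (φ ψ : 𝕜 → 𝕜) (a : ℕ → 𝕜 → 𝕜) : Prop where
  zero : ∀ x ∈ U, a 0 x = φ x
  succ : ∀ n, ∀ x ∈ U, a (n + 1) x =
    deriv (a n) x + ψ x * ∑ k ∈ Finset.range n, a k x * a (n - 1 - k) x

/-- The tau functions `τ_N`, which are the `|N| × |N|` Hankel determinants of the `a_n` for `N ≥ 0`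
and of the `b_n` for `N < 0`. -/
def hankelTau (a b : ℕ → 𝕜 → 𝕜) : ℤ → 𝕜 → 𝕜
  | .ofNat n => fun x => hankelDet (fun i => a i x) n
  | .negSucc n => fun x => hankelDet (fun i => b i x) (n + 1)

/-- The function `u_N = (log (τ_{N+1} / τ_N))'`, for an arbitrary sequence `τ`. -/
noncomputable def logDerivRatio (τ : ℤ → 𝕜 → 𝕜) (N : ℤ) : 𝕜 → 𝕜 :=
  fun x => deriv (τ (N + 1)) x / τ (N + 1) x - deriv (τ N) x / τ N x

lemma hankelTau_neg (a b : ℕ → 𝕜 → 𝕜) (N : ℤ) : hankelTau a b (-N) = hankelTau b a N := by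
  match N with
  | .ofNat 0 => exact funext fun _ => (hankelDet_zero _).trans (hankelDet_zero _).symm
  | .ofNat (n + 1) => rfl
  | .negSucc n => rfl

lemma eq_hankelTau {a b : ℕ → 𝕜 → 𝕜} {τ : ℤ → 𝕜 → 𝕜}
    (hpos : ∀ n : ℕ, τ (n + 1) = fun x => hankelDet (fun i => a i x) (n + 1)) (hzero : τ 0 = 1)
    (hneg : ∀ n : ℕ, τ (-(n + 1)) = fun x => hankelDet (fun i => b i x) (n + 1)) :
    τ = hankelTau a b := by
  funext N
  match N with
  | .ofNat 0 => exact hzero.trans (funext fun _ => (hankelDet_zero _).symm)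
  | .ofNat (n + 1) => exact hpos n
  | .negSucc n => exact hneg n

lemma logDerivRatio_hankelTau_neg_sub_one (a b : ℕ → 𝕜 → 𝕜) (N : ℤ) :
    logDerivRatio (hankelTau a b) (-N - 1) = -logDerivRatio (hankelTau b a) N := by
  funext x
  rw [logDerivRatio, sub_add_cancel, ← neg_add', hankelTau_neg, hankelTau_neg]
  exact (neg_sub _ _).symm

/-- The values at `x` of the generators of the universal differential ring. -/
noncomputable def jetValue (φ ψ : 𝕜 → 𝕜) (x : 𝕜) : Jet → 𝕜
  | .x => x
  | .phi => φ x
  | .dphi => deriv φ x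
  | .psi => ψ x
  | .dpsi => deriv ψ x

/-- The interpretation of the universal differential ring by functions, evaluated at `x`. -/
noncomputable def jetEval (φ ψ : 𝕜 → 𝕜) (x : 𝕜) : MvPolynomial Jet ℤ →+* 𝕜 :=
  eval₂Hom (Int.castRingHom 𝕜) (jetValue φ ψ x)

lemma jetEval_X (φ ψ : 𝕜 → 𝕜) (x : 𝕜) (j : Jet) : jetEval φ ψ x (X j) = jetValue φ ψ x j :=
  eval₂Hom_X' _ _ _

namespace IsSeedOn

variable {U : Set 𝕜} {φ ψ : 𝕜 → 𝕜} {α : 𝕜}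

lemma swap (h : IsSeedOn U φ ψ α) : IsSeedOn U ψ φ (-α) where
  differentiableAt_left := h.differentiableAt_right
  differentiableAt_right := h.differentiableAt_left
  differentiableAt_deriv_left := h.differentiableAt_deriv_right
  differentiableAt_deriv_right := h.differentiableAt_deriv_left
  deriv_deriv_left x hx := by rw [h.deriv_deriv_right x hx, mul_right_comm 2 (φ x)]
  deriv_deriv_right x hx := by rw [h.deriv_deriv_left x hx, mul_right_comm 2 (φ x)]
  wronskian x hx := by linear_combination -h.wronskian x hx

lemma of_differentiable {φ ψ : ℂ → ℂ} {α : ℂ} (hφ : Differentiable ℂ φ) (hψ : Differentiable ℂ ψ)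
    (hφ'' : ∀ x, deriv (deriv φ) x = (2 * x - 2 * ψ x * φ x) * φ x)
    (hψ'' : ∀ x, deriv (deriv ψ) x = (2 * x - 2 * ψ x * φ x) * ψ x)
    (hW : ∀ x, deriv φ x * ψ x - φ x * deriv ψ x = 2 * α) : IsSeedOn Set.univ φ ψ α where
  differentiableAt_left x _ := hφ x
  differentiableAt_right x _ := hψ x
  differentiableAt_deriv_left x _ := hφ.deriv x
  differentiableAt_deriv_right x _ := hψ.deriv x
  deriv_deriv_left x _ := hφ'' x
  deriv_deriv_right x _ := hψ'' x
  wronskian x _ := hW x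

lemma hasDerivAt_jetValue (h : IsSeedOn U φ ψ α) {x : 𝕜} (hx : x ∈ U) (j : Jet) :
    HasDerivAt (fun y => jetValue φ ψ y j) (jetEval φ ψ x (jetDerivative j)) x := by
  have hphi := (h.differentiableAt_deriv_left x hx).hasDerivAt
  have hpsi := (h.differentiableAt_deriv_right x hx).hasDerivAt
  rw [h.deriv_deriv_left x hx] at hphi
  rw [h.deriv_deriv_right x hx] at hpsi
  cases j <;> simp only [jetValue, jetDerivative, map_one, map_mul, map_sub, map_ofNat, jetEval_X]
  case x => exact hasDerivAt_id' x
  case phi => exact (h.differentiableAt_left x hx).hasDerivAt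
  case dphi => exact hphi.congr_deriv (by ring)
  case psi => exact (h.differentiableAt_right x hx).hasDerivAt
  case dpsi => exact hpsi.congr_deriv (by ring)

lemma realizesOn_jetEval (h : IsSeedOn U φ ψ α) :
    RealizesOn U jetDerivation (jetEval φ ψ) := by
  intro p x hx
  induction p using MvPolynomial.induction_on with
  | C n =>
    simpa [jetEval, jetDerivation] using hasDerivAt_const x (n : 𝕜)
  | add p q hp hq => simpa only [map_add] using hp.fun_add hq
  | mul_X p j hp =>
    simp only [map_mul, Derivation.leibniz, smul_eq_mul, map_add, jetDerivation_X, jetEval_X]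
    exact (hp.fun_mul (h.hasDerivAt_jetValue hx j)).congr_deriv (by ring)

lemma jetEval_jetWronskian (h : IsSeedOn U φ ψ α) {x : 𝕜} (hx : x ∈ U) :
    jetEval φ ψ x jetWronskian = 2 * α := by
  simp only [jetWronskian, map_sub, map_mul, jetEval_X]
  exact h.wronskian x hx

lemma jetEval_jetSeq (h : IsSeedOn U φ ψ α) (hU : IsOpen U) {a : ℕ → 𝕜 → 𝕜}
    (ha : IsEntrySeqOn U φ ψ a) (n : ℕ) : ∀ x ∈ U, jetEval φ ψ x (jetSeq n) = a n x := by
  induction n using Nat.strong_induction_on with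
  | _ n ih =>
    intro x hx
    cases n with
    | zero =>
      rw [jetSeq, convolutionSeq_zero, jetEval_X, ha.zero x hx]
      rfl
    | succ n =>
      have hderiv : deriv (a n) x = jetEval φ ψ x (jetDerivation (jetSeq n)) := by
        have heq : (fun y => jetEval φ ψ y (jetSeq n)) =ᶠ[𝓝 x] a n :=
          Filter.eventuallyEq_of_mem (hU.mem_nhds hx) (ih n n.lt_succ_self)
        rw [← heq.deriv_eq, (h.realizesOn_jetEval _ x hx).deriv]
      have hrec : jetSeq (n + 1) = _ := isConvolutionSeq_convolutionSeq _ _ _ n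
      rw [hrec, ha.succ n x hx, hderiv, map_add, map_mul, map_sum, jetEval_X]
      refine congrArg _ (congrArg _ (Finset.sum_congr rfl fun k hk => ?_))
      have hkn := Finset.mem_range.1 hk
      exact (map_mul _ _ _).trans (congrArg₂ _ (ih k (by lia) x hx) (ih (n - 1 - k) (by lia) x hx))

lemma jetEval_jetTau_succ (h : IsSeedOn U φ ψ α) (hU : IsOpen U) {a : ℕ → 𝕜 → 𝕜}
    (ha : IsEntrySeqOn U φ ψ a) (n : ℕ) {x : 𝕜} (hx : x ∈ U) :
    jetEval φ ψ x (jetTau (n + 1)) = hankelDet (fun i => a i x) n := by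
  rw [jetTau, map_shiftedTau, shiftedTau]
  exact congrArg (hankelDet · n) (funext fun i => h.jetEval_jetSeq hU ha i x hx)

theorem solvesPainleveIIAt_natCast (h : IsSeedOn U φ ψ α) (hU : IsOpen U) {a : ℕ → 𝕜 → 𝕜}
    (ha : IsEntrySeqOn U φ ψ a) (b : ℕ → 𝕜 → 𝕜) (n : ℕ) {x : 𝕜} (hx : x ∈ U)
    (hτ : hankelTau a b n x ≠ 0) (hτ' : hankelTau a b (n + 1) x ≠ 0) :
    SolvesPainleveIIAt (α + n) (logDerivRatio (hankelTau a b) n) x := by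
  have hev := h.realizesOn_jetEval
  have heval (m : ℕ) : ∀ y ∈ U, jetEval φ ψ y (jetTau (m + 1)) = hankelTau a b m y :=
    fun y hy => h.jetEval_jetTau_succ hU ha m hy
  have hderiv (m : ℕ) (y : 𝕜) (hy : y ∈ U) :
      jetEval φ ψ y (jetDerivation (jetTau (m + 1))) = deriv (hankelTau a b m) y := by
    have heq := Filter.eventuallyEq_of_mem (hU.mem_nhds hy) (heval m)
    rw [← heq.deriv_eq, (hev _ y hy).deriv]
  obtain ⟨hToda, hhirota₂, hhirota₁⟩ := jetTau_relations n
  have hc : jetEval φ ψ x (jetWronskian + 2 * n) = 2 * (α + n) := by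
    rw [map_add, h.jetEval_jetWronskian hx, map_mul, map_ofNat, map_natCast, mul_add]
  refine (hev.solvesPainleveIIAt hU (fun y _ => jetEval_X φ ψ y .x) hx hc hToda hhirota₂ hhirota₁
    ?_ ?_).congr ?_
  · rwa [heval n x hx]
  · rwa [heval (n + 1) x hx]
  · refine Filter.eventuallyEq_of_mem (hU.mem_nhds hx) fun y hy => ?_
    simp only [logDerivRatio, hderiv _ y hy, heval _ y hy]
    rfl

end IsSeedOn

end TauFunctions

end PainleveII

open PainleveII in
theorem uN_satisfies_painleveII_general {𝕜 : Type*} [NontriviallyNormedField 𝕜] {U : Set 𝕜}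
    (hU : IsOpen U) {α : 𝕜} {φ ψ : 𝕜 → 𝕜} (hφψ : IsSeedOn U φ ψ α) {a b : ℕ → 𝕜 → 𝕜}
    (ha : IsEntrySeqOn U φ ψ a) (hb : IsEntrySeqOn U ψ φ b) (N : ℤ) {x : 𝕜} (hx : x ∈ U)
    (hτN : hankelTau a b N x ≠ 0) (hτN1 : hankelTau a b (N + 1) x ≠ 0) :
    SolvesPainleveIIAt (α + N) (logDerivRatio (hankelTau a b) N) x := by
  obtain ⟨n, rfl | hN⟩ : ∃ n : ℕ, N = n ∨ N = -n - 1 := by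
    cases N with
    | ofNat n => exact ⟨n, .inl rfl⟩
    | negSucc n => exact ⟨n, .inr (by lia)⟩
  · exact_mod_cast hφψ.solvesPainleveIIAt_natCast hU ha b n hx hτN hτN1
  · have hswap := hφψ.swap.solvesPainleveIIAt_natCast hU hb a n hx
      (by rwa [← hankelTau_neg, show -(n : ℤ) = N + 1 by lia])
      (by rwa [← hankelTau_neg, show -(n + 1 : ℤ) = N by lia])
    rw [hN, logDerivRatio_hankelTau_neg_sub_one]
    convert hswap.neg using 1
    push_cast
    ring

/-- **Proposition 2.2 (iii).** Under the conditions `ψ''/ψ = φ''/φ = −2ψφ + 2x`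
and `φ'ψ − φψ' = 2α`, the function `u_N = (log(τ_{N+1}/τ_N))' = τ_{N+1}'/τ_{N+1} − τ_N'/τ_N`,
where `τ_N` is the Hankel determinant built from the recursively defined `a_n, b_n`,
satisfies Painlevé II with parameter `α + N`. -/
theorem uN_satisfies_painleveII
    (α : ℂ) (φ ψ : ℂ → ℂ) (hφ : Differentiable ℂ φ) (hψ : Differentiable ℂ ψ)
    (hψ'' : ∀ x : ℂ, deriv (deriv ψ) x = (2 * x - 2 * ψ x * φ x) * ψ x)
    (hφ'' : ∀ x : ℂ, deriv (deriv φ) x = (2 * x - 2 * ψ x * φ x) * φ x)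
    (hW : ∀ x : ℂ, deriv φ x * ψ x - φ x * deriv ψ x = 2 * α)
    (a b : ℕ → ℂ → ℂ)
    (ha0 : a 0 = φ)
    (ha : ∀ n : ℕ, a (n + 1) =
      deriv (a n) + fun x => ψ x * ∑ k ∈ Finset.range n, a k x * a (n - 1 - k) x)
    (hb0 : b 0 = ψ)
    (hb : ∀ n : ℕ, b (n + 1) =
      deriv (b n) + fun x => φ x * ∑ k ∈ Finset.range n, b k x * b (n - 1 - k) x)
    (τ : ℤ → ℂ → ℂ)
    (hτpos : ∀ N : ℕ, τ ((N : ℤ) + 1) =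
      fun x => (Matrix.of fun i j : Fin (N + 1) => a (i.1 + j.1) x).det)
    (hτ0 : τ 0 = 1)
    (hτneg : ∀ N : ℕ, τ (-((N : ℤ) + 1)) =
      fun x => (Matrix.of fun i j : Fin (N + 1) => b (i.1 + j.1) x).det)
    (N : ℤ)
    (hτN : ∀ x : ℂ, τ N x ≠ 0) (hτN1 : ∀ x : ℂ, τ (N + 1) x ≠ 0) :
    ∀ x : ℂ,
      deriv (deriv (fun y => deriv (τ (N + 1)) y / τ (N + 1) y - deriv (τ N) y / τ N y)) x =
        2 * (deriv (τ (N + 1)) x / τ (N + 1) x - deriv (τ N) x / τ N x) ^ 3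
          - 4 * x * (deriv (τ (N + 1)) x / τ (N + 1) x - deriv (τ N) x / τ N x)
          + 4 * (α + (N : ℂ) + 1 / 2) := by
  obtain rfl := PainleveII.eq_hankelTau hτpos hτ0 hτneg
  have hφψ := PainleveII.IsSeedOn.of_differentiable hφ hψ hφ'' hψ'' hW
  have ha' : PainleveII.IsEntrySeqOn Set.univ φ ψ a :=
    ⟨fun x _ => congrFun ha0 x, fun n x _ => congrFun (ha n) x⟩
  have hb' : PainleveII.IsEntrySeqOn Set.univ ψ φ b :=
    ⟨fun x _ => congrFun hb0 x, fun n x _ => congrFun (hb n) x⟩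
  intro x
  have hu := uN_satisfies_painleveII_general isOpen_univ hφψ ha' hb' N (Set.mem_univ x)
    (hτN x) (hτN1 x)
  rw [show 4 * (α + N + 1 / 2) = 4 * (α + N) + 2 by ring]
  exact hu
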